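/- arXiv:1107.5786 — 3 statements merged into one kernel-verified Lean document; each statement's English description precedes it below -/
import Mathlib

section
/- There exist constants 0 < c < C such that the probability that the diameter of the uniform random recursive tree T_n (the length of the longest shortest path in the tree, viewed as a simple graph) lies in the interval [c·ln n, C·ln n] tends to 1 as n → ∞. -/
open MeasureTheory ProbabilityTheory Filter

/-- The sample space of parent choices for the uniform random recursive tree on
`{0, 1, …, n-1}`: for each `j : Fin (n-1)`, the parent of vertex `j+1` is an element of
`{0, …, j}`, encoded as `Fin (j+1)`. -/
abbrev URTSpace (n : ℕ) : Type := (j : Fin (n - 1)) → Fin ((j : ℕ) + 1)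

/-- The law of the uniform random recursive tree: all the parents are chosen independently
and uniformly at random. -/
noncomputable def urtMeasure (n : ℕ) : Measure (URTSpace n) :=
  Measure.pi fun j => (PMF.uniformOfFintype (Fin ((j : ℕ) + 1))).toMeasure

/-- The uniform random recursive tree with parent map `p`, as a simple graph on `Fin n`:
its edges are `{j+1, p j}` for `1 ≤ j+1 ≤ n-1`. -/
def urtGraph (n : ℕ) (p : URTSpace n) : SimpleGraph (Fin n) :=
  SimpleGraph.fromEdgeSet
    {e | ∃ j : Fin (n - 1),
      e = s(⟨(j : ℕ) + 1, by have := j.isLt; omega⟩,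
            ⟨(p j : ℕ), by have := j.isLt; have := (p j).isLt; omega⟩)}

/-!
Let `D i` be the depth of vertex `i`, that is, its distance from the root. The largest depth `h`
controls the diameter: `h ≤ diam ≤ 2 h`. The parent of `i + 1` is uniform on `{0, …, i}` and
independent of `D 0, …, D i`, so the moment generating functions satisfy
`(i + 1) 𝔼[exp (t D (i + 1))] = exp t * ∑ k ≤ i, 𝔼[exp (t D k)]`; subtracting two consecutive
instances gives `𝔼[exp (t D i)] = ∏ k < i, (1 + (exp t - 1) / (k + 1)) ≤ exp ((exp t - 1) H_i)`,
a Poisson bound with the harmonic number `H_i` as mean. By Chernoff's inequality, with high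
probability the depth of the last vertex exceeds `c log n` for every `c < 1`, and Chernoff at
`t = 1` with a union bound over all vertices keeps `h` below `a log n` for every `a > e`.
-/

section Resampling

variable {ι : Type*} [Fintype ι] [DecidableEq ι] {X : ι → Type*} [∀ i, MeasurableSpace (X i)]
  (μ : (i : ι) → Measure (X i)) [∀ i, SigmaFinite (μ i)] (i : ι) [IsProbabilityMeasure (μ i)]

lemma measurePreserving_update_pi :
    MeasurePreserving (fun x : ((j : ι) → X j) × X i => Function.update x.1 i x.2)
      ((Measure.pi μ).prod (μ i)) (Measure.pi μ) := by
  refine ⟨measurable_update', (Measure.pi_eq fun s hs => ?_).symm⟩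
  have preimage_pi : (fun x : ((j : ι) → X j) × X i => Function.update x.1 i x.2) ⁻¹'
      Set.univ.pi s = Set.univ.pi (Function.update s i Set.univ) ×ˢ s i := by
    ext ⟨x, y⟩
    simp only [Set.mem_preimage, Set.mem_univ_pi, Set.mem_prod]
    rw [Function.forall_update_iff x (fun j z => z ∈ s j),
      Function.forall_update_iff s (fun j t => x j ∈ t)]
    simp [and_comm]
  rw [Measure.map_apply measurable_update' (.univ_pi hs), preimage_pi, Measure.prod_prod,
    Measure.pi_pi, ← Finset.mul_prod_erase _ _ (Finset.mem_univ i),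
    ← Finset.mul_prod_erase _ (fun j => μ j (s j)) (Finset.mem_univ i), Function.update_self,
    measure_univ, one_mul, mul_comm]
  congr 1
  exact Finset.prod_congr rfl fun j hj => by rw [Function.update_of_ne (Finset.ne_of_mem_erase hj)]

lemma integral_integral_update_pi {E : Type*} [NormedAddCommGroup E] [NormedSpace ℝ E]
    {f : ((j : ι) → X j) → E} (hf : Integrable f (Measure.pi μ)) :
    ∫ y, ∫ x, f (Function.update x i y) ∂Measure.pi μ ∂μ i = ∫ x, f x ∂Measure.pi μ := by
  have update_preserves := measurePreserving_update_pi μ i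
  rw [← update_preserves.map_eq] at hf
  calc ∫ y, ∫ x, f (Function.update x i y) ∂Measure.pi μ ∂μ i
    _ = ∫ z, f (Function.update z.1 i z.2) ∂(Measure.pi μ).prod (μ i) :=
      (integral_prod_symm _ (hf.comp_measurable update_preserves.measurable)).symm
    _ = ∫ x, f x ∂Measure.pi μ := by
      rw [← integral_map update_preserves.aemeasurable hf.aestronglyMeasurable,
        update_preserves.map_eq]

end Resampling

section Graph

variable {V : Type*} {G : SimpleGraph V}

lemma le_add_dist_of_forall_adj_le_add_one (hG : G.Connected) {f : V → ℕ}
    (hf : ∀ u v, G.Adj u v → f v ≤ f u + 1) (u v : V) : f v ≤ f u + G.dist u v := by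
  obtain ⟨w, hw⟩ := hG.exists_walk_length_eq_dist u v
  rw [← hw]
  clear hw
  induction w with
  | nil => simp
  | cons h w ih =>
    have := hf _ _ h
    rw [SimpleGraph.Walk.length_cons]
    omega

lemma exists_diam_le_dist_add_dist (hG : G.Connected) (r : V) :
    ∃ u v, G.diam ≤ G.dist r u + G.dist r v := by
  have : Nonempty V := ⟨r⟩
  obtain ⟨u, v, huv⟩ := G.exists_dist_eq_diam
  refine ⟨u, v, ?_⟩
  rw [← huv, G.dist_comm (u := r)]
  exact hG.dist_triangle

end Graph

section Depth

variable {n : ℕ}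

/-- The depth of vertex `i` in the recursive tree with parent map `p`: the number of steps to the
root along parents. It is defined on all of `ℕ`, with value `0` outside `{0, …, n - 1}`. -/
def urtDepth (p : URTSpace n) : ℕ → ℕ
  | 0 => 0
  | i + 1 => if h : i < n - 1 then urtDepth p (p ⟨i, h⟩) + 1 else 0
termination_by i => i
decreasing_by exact (p ⟨i, h⟩).isLt

@[simp]
lemma urtDepth_zero (p : URTSpace n) : urtDepth p 0 = 0 := by
  rw [urtDepth]

lemma urtDepth_succ (p : URTSpace n) (j : Fin (n - 1)) :
    urtDepth p (j + 1) = urtDepth p (p j) + 1 := by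
  rw [urtDepth, dif_pos j.isLt]

lemma urtDepth_update_of_le (p : URTSpace n) (j : Fin (n - 1)) (k : Fin ((j : ℕ) + 1)) {i : ℕ}
    (hi : i ≤ j) : urtDepth (Function.update p j k) i = urtDepth p i := by
  induction i using Nat.strong_induction_on with
  | _ i ih =>
    cases i with
    | zero => simp
    | succ i =>
      obtain ⟨l, rfl⟩ : ∃ l : Fin (n - 1), (l : ℕ) = i := ⟨⟨i, by omega⟩, rfl⟩
      have hlj : l ≠ j := Fin.ne_of_lt hi
      have parent_lt := (p l).isLt
      rw [urtDepth_succ, urtDepth_succ, Function.update_of_ne hlj, ih _ parent_lt (by omega)]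

lemma urtDepth_update_succ (p : URTSpace n) (j : Fin (n - 1)) (k : Fin ((j : ℕ) + 1)) :
    urtDepth (Function.update p j k) (j + 1) = urtDepth p k + 1 := by
  rw [urtDepth_succ, Function.update_self, urtDepth_update_of_le p j k (Nat.le_of_lt_succ k.isLt)]

lemma urtGraph_adj_iff (p : URTSpace n) (u v : Fin n) :
    (urtGraph n p).Adj u v ↔
      ∃ j : Fin (n - 1), ((u : ℕ) = j + 1 ∧ (v : ℕ) = p j) ∨ ((u : ℕ) = p j ∧ (v : ℕ) = j + 1) := by
  simp only [urtGraph, SimpleGraph.fromEdgeSet_adj, Set.mem_ofPred_eq, Sym2.eq_iff, Fin.ext_iff]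
  refine ⟨And.left, fun h => ⟨h, ?_⟩⟩
  obtain ⟨j, hj⟩ := h
  have := (p j).isLt
  omega

lemma urtDepth_le_add_one_of_adj {p : URTSpace n} {u v : Fin n} (h : (urtGraph n p).Adj u v) :
    urtDepth p v ≤ urtDepth p u + 1 := by
  obtain ⟨j, ⟨hu, hv⟩ | ⟨hu, hv⟩⟩ := (urtGraph_adj_iff p u v).1 h <;>
    simp only [hu, hv, urtDepth_succ] <;> omega

variable [NeZero n]

lemma exists_walk_root_length_eq_urtDepth (p : URTSpace n) (v : Fin n) :
    ∃ w : (urtGraph n p).Walk v 0, w.length = urtDepth p v := by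
  induction v using WellFoundedLT.induction with
  | ind v ih =>
    by_cases hv : v = 0
    · subst hv
      exact ⟨.nil, by simp⟩
    · obtain ⟨j, hj⟩ : ∃ j : Fin (n - 1), (v : ℕ) = j + 1 := by
        have : (v : ℕ) ≠ 0 := fun h => hv (Fin.ext (by simpa using h))
        exact ⟨⟨v - 1, by omega⟩, by simp only; omega⟩
      have parent_lt : (p j : ℕ) < v := (p j).isLt.trans_eq hj.symm
      obtain ⟨w, hw⟩ := ih ⟨p j, parent_lt.trans v.isLt⟩ parent_lt
      refine ⟨.cons ((urtGraph_adj_iff p _ _).2 ⟨j, .inl ⟨hj, rfl⟩⟩) w, ?_⟩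
      rw [SimpleGraph.Walk.length_cons, hw, ← urtDepth_succ, ← hj]

lemma urtGraph_connected (p : URTSpace n) : (urtGraph n p).Connected := by
  refine (SimpleGraph.connected_iff_exists_forall_reachable _).2 ⟨0, fun v => ?_⟩
  obtain ⟨w, -⟩ := exists_walk_root_length_eq_urtDepth p v
  exact w.reachable.symm

lemma urtGraph_dist_root (p : URTSpace n) (v : Fin n) :
    (urtGraph n p).dist 0 v = urtDepth p v := by
  apply le_antisymm
  · obtain ⟨w, hw⟩ := exists_walk_root_length_eq_urtDepth p v
    rw [SimpleGraph.dist_comm, ← hw]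
    exact SimpleGraph.dist_le w
  · simpa using le_add_dist_of_forall_adj_le_add_one (f := fun v => urtDepth p v)
      (urtGraph_connected p) (fun _ _ => urtDepth_le_add_one_of_adj) 0 v

lemma urtDepth_le_diam (p : URTSpace n) (v : Fin n) : urtDepth p v ≤ (urtGraph n p).diam := by
  rw [← urtGraph_dist_root]
  exact SimpleGraph.dist_le_diam
    (SimpleGraph.connected_iff_ediam_ne_top.1 (urtGraph_connected p))

lemma exists_lt_urtDepth_of_two_mul_lt_diam {p : URTSpace n} {x : ℝ}
    (h : 2 * x < (urtGraph n p).diam) : ∃ v : Fin n, x < urtDepth p v := by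
  by_contra! depth_le
  obtain ⟨u, v, huv⟩ := exists_diam_le_dist_add_dist (urtGraph_connected p) 0
  rw [urtGraph_dist_root, urtGraph_dist_root] at huv
  have : ((urtGraph n p).diam : ℝ) ≤ urtDepth p u + urtDepth p v := mod_cast huv
  linarith [depth_le u, depth_le v]

end Depth

section Moments

variable {n : ℕ}

instance : IsProbabilityMeasure (urtMeasure n) := by
  unfold urtMeasure
  infer_instance

lemma succ_mul_integral_urtMeasure (j : Fin (n - 1)) (f : URTSpace n → ℝ) :
    ((j : ℝ) + 1) * ∫ p, f p ∂urtMeasure n =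
      ∑ k : Fin ((j : ℕ) + 1), ∫ p, f (Function.update p j k) ∂urtMeasure n := by
  have resample := integral_integral_update_pi
    (fun i : Fin (n - 1) => (PMF.uniformOfFintype (Fin ((i : ℕ) + 1))).toMeasure) j (f := f)
    .of_finite
  rw [PMF.integral_eq_sum] at resample
  simp only [PMF.uniformOfFintype_apply, Fintype.card_fin, smul_eq_mul, ← Finset.mul_sum]
    at resample
  rw [urtMeasure, ← resample, ← mul_assoc]
  have : ((j : ℝ) + 1) * ((((j : ℕ) + 1 : ℕ) : ENNReal)⁻¹).toReal = 1 := by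
    rw [ENNReal.toReal_inv, ENNReal.toReal_natCast]
    push_cast
    exact mul_inv_cancel₀ (by positivity)
  rw [this, one_mul]

lemma succ_mul_mgf_urtDepth_succ (t : ℝ) {i : ℕ} (hi : i + 1 < n) :
    ((i : ℝ) + 1) * mgf (fun p => (urtDepth p (i + 1) : ℝ)) (urtMeasure n) t =
      Real.exp t * ∑ k ∈ Finset.range (i + 1),
        mgf (fun p => (urtDepth p k : ℝ)) (urtMeasure n) t := by
  obtain ⟨j, rfl⟩ : ∃ j : Fin (n - 1), (j : ℕ) = i := ⟨⟨i, by omega⟩, rfl⟩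
  simp only [mgf]
  rw [succ_mul_integral_urtMeasure, Finset.sum_range, Finset.mul_sum]
  refine Finset.sum_congr rfl fun k _ => ?_
  rw [← integral_const_mul]
  simp only [urtDepth_update_succ, Nat.cast_succ, mul_add, mul_one, Real.exp_add, mul_comm]

lemma mgf_urtDepth_succ (t : ℝ) {i : ℕ} (hi : i + 1 < n) :
    mgf (fun p => (urtDepth p (i + 1) : ℝ)) (urtMeasure n) t =
      (1 + (Real.exp t - 1) * ((i : ℝ) + 1)⁻¹) *
        mgf (fun p => (urtDepth p i : ℝ)) (urtMeasure n) t := by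
  have recurrence := succ_mul_mgf_urtDepth_succ t hi
  have previous : (i : ℝ) * mgf (fun p => (urtDepth p i : ℝ)) (urtMeasure n) t =
      Real.exp t * ∑ k ∈ Finset.range i,
        mgf (fun p => (urtDepth p k : ℝ)) (urtMeasure n) t := by
    cases i with
    | zero => simp
    | succ i => exact_mod_cast succ_mul_mgf_urtDepth_succ t (Nat.lt_of_succ_lt hi)
  rw [Finset.sum_range_succ, mul_add, ← previous] at recurrence
  field_simp
  linear_combination recurrence

lemma mgf_urtDepth (t : ℝ) {i : ℕ} (hi : i < n) :
    mgf (fun p => (urtDepth p i : ℝ)) (urtMeasure n) t =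
      ∏ k ∈ Finset.range i, (1 + (Real.exp t - 1) * ((k : ℝ) + 1)⁻¹) := by
  induction i with
  | zero => simp [mgf]
  | succ i ih =>
    rw [mgf_urtDepth_succ t hi, ih (Nat.lt_of_succ_lt hi), Finset.prod_range_succ, mul_comm]

lemma mgf_urtDepth_le (t : ℝ) {i : ℕ} (hi : i < n) :
    mgf (fun p => (urtDepth p i : ℝ)) (urtMeasure n) t ≤
      Real.exp ((Real.exp t - 1) * harmonic i) := by
  have factor_nonneg (k : ℕ) : 0 ≤ 1 + (Real.exp t - 1) * ((k : ℝ) + 1)⁻¹ := by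
    have : 1 + (Real.exp t - 1) * ((k : ℝ) + 1)⁻¹ = (k + Real.exp t) / (k + 1) := by
      field_simp
      ring
    rw [this]
    positivity
  calc mgf (fun p => (urtDepth p i : ℝ)) (urtMeasure n) t
    _ = ∏ k ∈ Finset.range i, (1 + (Real.exp t - 1) * ((k : ℝ) + 1)⁻¹) := mgf_urtDepth t hi
    _ ≤ ∏ k ∈ Finset.range i, Real.exp ((Real.exp t - 1) * ((k : ℝ) + 1)⁻¹) :=
      Finset.prod_le_prod (fun k _ => factor_nonneg k) fun k _ => by
        rw [add_comm]
        exact Real.add_one_le_exp _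
    _ = Real.exp ((Real.exp t - 1) * harmonic i) := by
      rw [← Real.exp_sum, ← Finset.mul_sum]
      simp [harmonic]

end Moments

section Tails

variable {n : ℕ}

lemma urtMeasure_le_urtDepth_le_exp (a : ℝ) {t : ℝ} (ht : 0 ≤ t) {i : ℕ} (hi : i < n) :
    (urtMeasure n).real {p | a ≤ urtDepth p i} ≤
      Real.exp (-t * a + (Real.exp t - 1) * harmonic i) := by
  rw [Real.exp_add]
  exact (measure_ge_le_exp_mul_mgf a ht .of_finite).trans (by gcongr; exact mgf_urtDepth_le t hi)

lemma urtMeasure_urtDepth_le_le_exp (a : ℝ) {t : ℝ} (ht : t ≤ 0) {i : ℕ} (hi : i < n) :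
    (urtMeasure n).real {p | urtDepth p i ≤ a} ≤
      Real.exp (-t * a + (Real.exp t - 1) * harmonic i) := by
  rw [Real.exp_add]
  exact (measure_le_le_exp_mul_mgf a ht .of_finite).trans (by gcongr; exact mgf_urtDepth_le t hi)

lemma urtMeasure_exists_le_urtDepth_le_mul_exp (a : ℝ) {t : ℝ} (ht : 0 ≤ t) :
    (urtMeasure n).real {p | ∃ v : Fin n, a ≤ urtDepth p v} ≤
      n * Real.exp (-t * a + (Real.exp t - 1) * (1 + Real.log n)) := by
  have harmonic_le (v : Fin n) : (harmonic v : ℝ) ≤ 1 + Real.log n := by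
    refine (harmonic_le_one_add_log v).trans (add_le_add_right ?_ 1)
    rcases Nat.eq_zero_or_pos v with hv | hv
    · rw [hv, Nat.cast_zero, Real.log_zero]
      exact Real.log_natCast_nonneg n
    · exact Real.log_le_log (mod_cast hv) (mod_cast v.isLt.le)
  have exp_sub_one_nonneg : 0 ≤ Real.exp t - 1 := sub_nonneg.2 (Real.one_le_exp ht)
  calc (urtMeasure n).real {p | ∃ v : Fin n, a ≤ urtDepth p v}
    _ ≤ ∑ v : Fin n, (urtMeasure n).real {p | a ≤ urtDepth p v} := by
      rw [Set.ofPred_exists]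
      exact measureReal_iUnion_fintype_le _
    _ ≤ ∑ _v : Fin n, Real.exp (-t * a + (Real.exp t - 1) * (1 + Real.log n)) :=
      Finset.sum_le_sum fun v _ => (urtMeasure_le_urtDepth_le_exp a ht v.isLt).trans
        (by gcongr; exact harmonic_le v)
    _ = n * Real.exp (-t * a + (Real.exp t - 1) * (1 + Real.log n)) := by simp

lemma urtMeasure_lt_diam_le_rpow [NeZero n] (C : ℝ) :
    (urtMeasure n).real {p | C * Real.log n < (urtGraph n p).diam} ≤
      Real.exp (Real.exp 1 - 1) * (n : ℝ) ^ (-(C / 2 - Real.exp 1)) := by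
  have n_pos : (0 : ℝ) < n := mod_cast NeZero.pos n
  calc (urtMeasure n).real {p | C * Real.log n < (urtGraph n p).diam}
    _ ≤ (urtMeasure n).real {p | ∃ v : Fin n, C / 2 * Real.log n ≤ urtDepth p v} := by
      refine measureReal_mono fun p hp => ?_
      obtain ⟨v, hv⟩ := exists_lt_urtDepth_of_two_mul_lt_diam (x := C / 2 * Real.log n)
        (lt_of_eq_of_lt (by ring) (Set.mem_ofPred.1 hp))
      exact ⟨v, hv.le⟩
    _ ≤ n * Real.exp (-1 * (C / 2 * Real.log n) + (Real.exp 1 - 1) * (1 + Real.log n)) :=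
      urtMeasure_exists_le_urtDepth_le_mul_exp _ zero_le_one
    _ = Real.exp (Real.exp 1 - 1) * (n : ℝ) ^ (-(C / 2 - Real.exp 1)) := by
      nth_rw 1 [← Real.exp_log n_pos]
      rw [Real.rpow_def_of_pos n_pos, ← Real.exp_add, ← Real.exp_add]
      ring_nf

lemma urtMeasure_diam_lt_le_rpow [NeZero n] (c : ℝ) {t : ℝ} (ht : t ≤ 0) :
    (urtMeasure n).real {p | (urtGraph n p).diam < c * Real.log n} ≤
      (n : ℝ) ^ (-(t * c + 1 - Real.exp t)) := by
  have n_pos := NeZero.pos n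
  have log_le_harmonic : Real.log n ≤ harmonic (n - 1) := by
    simpa [Nat.sub_add_cancel n_pos] using log_add_one_le_harmonic (n - 1)
  calc (urtMeasure n).real {p | (urtGraph n p).diam < c * Real.log n}
    _ ≤ (urtMeasure n).real {p | urtDepth p (n - 1) ≤ c * Real.log n} :=
      measureReal_mono fun p hp => (Nat.cast_le.2
        (urtDepth_le_diam p ⟨n - 1, Nat.sub_one_lt_of_lt n_pos⟩)).trans (Set.mem_ofPred.1 hp).le
    _ ≤ Real.exp (-t * (c * Real.log n) + (Real.exp t - 1) * harmonic (n - 1)) :=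
      urtMeasure_urtDepth_le_le_exp _ ht (Nat.sub_one_lt_of_lt n_pos)
    _ ≤ Real.exp (-t * (c * Real.log n) + (Real.exp t - 1) * Real.log n) := by
      gcongr Real.exp (_ + ?_)
      exact mul_le_mul_of_nonpos_left log_le_harmonic (sub_nonpos.2 (Real.exp_le_one_iff.2 ht))
    _ = (n : ℝ) ^ (-(t * c + 1 - Real.exp t)) := by
      rw [Real.rpow_def_of_pos (mod_cast n_pos)]
      ring_nf

lemma tendsto_natCast_rpow_neg_atTop {y : ℝ} (hy : 0 < y) :
    Tendsto (fun n : ℕ => (n : ℝ) ^ (-y)) atTop (nhds 0) :=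
  (tendsto_rpow_neg_atTop hy).comp tendsto_natCast_atTop_atTop

lemma tendsto_urtMeasure_lt_diam_zero {C : ℝ} (hC : 2 * Real.exp 1 < C) :
    Tendsto (fun n : ℕ => (urtMeasure n).real {p | C * Real.log n < (urtGraph n p).diam})
      atTop (nhds 0) := by
  have bound_tendsto := (tendsto_natCast_rpow_neg_atTop
    (show 0 < C / 2 - Real.exp 1 by linarith)).const_mul (Real.exp (Real.exp 1 - 1))
  rw [mul_zero] at bound_tendsto
  refine squeeze_zero' (.of_forall fun _ => measureReal_nonneg) ?_ bound_tendsto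
  filter_upwards [eventually_ne_atTop 0] with n hn
  have : NeZero n := ⟨hn⟩
  exact urtMeasure_lt_diam_le_rpow C

lemma exists_neg_exp_lt_mul_add_one {c : ℝ} (hc : c < 1) :
    ∃ t < 0, Real.exp t < t * c + 1 := by
  -- With `s = 1 - c > 0` this reads `exp (-s) ≤ 1 / (1 + s) < 1 - s + s ^ 2`.
  refine ⟨c - 1, by linarith, ?_⟩
  have exp_mul_le : Real.exp (c - 1) * (2 - c) ≤ 1 := by
    have := Real.add_one_le_exp (1 - c)
    calc Real.exp (c - 1) * (2 - c) ≤ Real.exp (c - 1) * Real.exp (1 - c) := by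
          gcongr
          linarith
      _ = 1 := by rw [← Real.exp_add]; simp
  have : 0 < (1 - c) ^ 3 := pow_pos (by linarith) 3
  refine lt_of_mul_lt_mul_right (a := 2 - c) ?_ (by linarith)
  linarith [show ((c - 1) * c + 1) * (2 - c) = 1 + (1 - c) ^ 3 by ring]

lemma tendsto_urtMeasure_diam_lt_zero {c : ℝ} (hc : c < 1) :
    Tendsto (fun n : ℕ => (urtMeasure n).real {p | (urtGraph n p).diam < c * Real.log n})
      atTop (nhds 0) := by
  obtain ⟨t, ht, exp_lt⟩ := exists_neg_exp_lt_mul_add_one hc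
  refine squeeze_zero' (.of_forall fun _ => measureReal_nonneg) ?_
    (tendsto_natCast_rpow_neg_atTop (sub_pos.2 exp_lt))
  filter_upwards [eventually_ne_atTop 0] with n hn
  have : NeZero n := ⟨hn⟩
  exact urtMeasure_diam_lt_le_rpow c ht.le

end Tails

theorem urt_diameter_general {c C : ℝ} (hc : c < 1) (hC : 2 * Real.exp 1 < C) :
    Tendsto (fun n : ℕ =>
        (urtMeasure n {p | c * Real.log n ≤ ((urtGraph n p).diam : ℝ) ∧
          ((urtGraph n p).diam : ℝ) ≤ C * Real.log n}).toReal)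
      atTop (nhds 1) := by
  have lower_tendsto : Tendsto (fun n : ℕ =>
      1 - ((urtMeasure n).real {p | (urtGraph n p).diam < c * Real.log n} +
        (urtMeasure n).real {p | C * Real.log n < (urtGraph n p).diam})) atTop (nhds 1) := by
    simpa using
      ((tendsto_urtMeasure_diam_lt_zero hc).add (tendsto_urtMeasure_lt_diam_zero hC)).const_sub 1
  refine tendsto_of_tendsto_of_tendsto_of_le_of_le lower_tendsto tendsto_const_nhds (fun n => ?_)
    fun n => measureReal_le_one
  rw [sub_le_comm, ← measureReal_def, ← probReal_compl_eq_one_sub (Set.toFinite _).measurableSet]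
  refine (measureReal_mono fun p hp => ?_).trans (measureReal_union_le _ _)
  simpa only [Set.mem_union, Set.mem_compl_iff, Set.mem_ofPred_eq, not_and_or, not_le] using hp

/-- With high probability the diameter of the uniform random recursive tree is of order
`Θ(ln n)`: there are constants `0 < c < C` such that the probability that the diameter lies
in `[c·ln n, C·ln n]` tends to `1` as `n → ∞`. -/
theorem urt_diameter :
    ∃ c C : ℝ, 0 < c ∧ c < C ∧
      Tendsto (fun n : ℕ =>
          (urtMeasure n {p | c * Real.log n ≤ ((urtGraph n p).diam : ℝ) ∧
            ((urtGraph n p).diam : ℝ) ≤ C * Real.log n}).toReal)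
        atTop (nhds 1) := by
  refine ⟨1 / 2, 6, by norm_num, by norm_num, urt_diameter_general (by norm_num) ?_⟩
  linarith [Real.exp_one_lt_three]
end

section
/- There exist constants 0 < c < C such that the probability that the maximum vertex degree of the uniform random recursive tree T_n lies in the interval [c·ln n, C·ln n] tends to 1 as n → ∞. Here the degree of vertex j in T_n is the number of indices 1 ≤ i ≤ n−1 with p_i = j, plus 1 if j ≠ 0. -/
open MeasureTheory ProbabilityTheory Filter

/-- The degree of vertex `v` in the uniform random recursive tree with parent map `p`:
the number of vertices having `v` as parent, plus `1` for the edge to the parent of `v`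
if `v` is not the root `0`. -/
def urtDegree (n : ℕ) (p : URTSpace n) (v : Fin n) : ℕ :=
  (Finset.univ.filter fun j : Fin (n - 1) => (p j : ℕ) = (v : ℕ)).card +
    (if (v : ℕ) = 0 then 0 else 1)

/-- The maximum degree of the uniform random recursive tree with parent map `p`. -/
def urtMaxDegree (n : ℕ) (p : URTSpace n) : ℕ :=
  Finset.univ.sup (urtDegree n p)

/-!
Let `X v` be the number of children of `v` and `Δ` the maximum degree. The parents being
independent, `𝔼 a ^ X v = ∏ v ≤ j < n - 1, (1 + (a - 1) / (j + 1))`. For `a = 2` this telescopes to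
`n / (v + 1)`, so `𝔼 2 ^ Δ ≤ 2 ∑ v, 𝔼 2 ^ X v = 2 n Hₙ`, where `Hₙ` is the harmonic number, and
Chernoff's bound at base `2` excludes `Δ ≥ C log n` whenever `C log 2 > 1`. For `a ≤ 1` we have
`𝔼 a ^ Δ ≤ 𝔼 a ^ X 0 ≤ n ^ (a - 1)`, and Chernoff's bound at base `a = c` excludes `Δ ≤ c log n`
whenever `0 < c < 1`, since then `c - 1 < c log c`.
-/

lemma integral_ite_mem_one {α : Type*} [MeasurableSpace α] (μ : Measure α)
    [IsProbabilityMeasure μ] {s : Set α} [DecidablePred (· ∈ s)] (hs : MeasurableSet s) (a : ℝ) :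
    ∫ x, (if x ∈ s then a else 1) ∂μ = 1 + (a - 1) * μ.real s := by
  have ite_eq : ∀ x, (if x ∈ s then a else 1) = 1 + s.indicator (fun _ ↦ a - 1) x := by
    intro x
    by_cases hx : x ∈ s <;> simp [hx]
  simp_rw [ite_eq]
  rw [integral_add (integrable_const _) ((integrable_const _).indicator hs),
    integral_indicator_const _ hs]
  simp [mul_comm]

lemma integral_pow_card_filter_mem_pi {ι : Type*} [Fintype ι] {X : ι → Type*}
    [∀ i, MeasurableSpace (X i)] (μ : ∀ i, Measure (X i)) [∀ i, IsProbabilityMeasure (μ i)]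
    {s : ∀ i, Set (X i)} [∀ i, DecidablePred (· ∈ s i)] (hs : ∀ i, MeasurableSet (s i)) (a : ℝ) :
    ∫ x, a ^ (Finset.univ.filter fun i ↦ x i ∈ s i).card ∂(Measure.pi μ) =
      ∏ i, (1 + (a - 1) * (μ i).real (s i)) := by
  have pow_eq_prod : ∀ x : ∀ i, X i, a ^ (Finset.univ.filter fun i ↦ x i ∈ s i).card =
      ∏ i, if x i ∈ s i then a else 1 := by
    intro x
    rw [← Finset.prod_filter, Finset.prod_const]
  simp_rw [pow_eq_prod]
  rw [integral_fintype_prod_eq_prod (fun i (y : X i) ↦ if y ∈ s i then a else 1)]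
  exact Finset.prod_congr rfl fun i _ ↦ integral_ite_mem_one (μ i) (hs i) a

lemma real_uniformOfFintype_fin_val_eq (k v : ℕ) :
    (PMF.uniformOfFintype (Fin (k + 1))).toMeasure.real {x | (x : ℕ) = v} =
      if v ≤ k then ((k : ℝ) + 1)⁻¹ else 0 := by
  rw [measureReal_def, PMF.toMeasure_uniformOfFintype_apply _ (Set.toFinite _).measurableSet]
  split_ifs with hv
  · have singleton_eq : {x : Fin (k + 1) | (x : ℕ) = v} = {⟨v, by omega⟩} := by
      ext x
      simp [Fin.ext_iff]
    simp [singleton_eq, ENNReal.toReal_add]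
  · have eq_empty : {x : Fin (k + 1) | (x : ℕ) = v} = ∅ := by
      ext x
      simp only [Set.mem_ofPred_eq, Set.mem_empty_iff_false, iff_false]
      omega
    simp [eq_empty]

section Chernoff

variable {Ω : Type*} [MeasurableSpace Ω] {μ : Measure Ω} {N : Ω → ℕ} {a : ℝ}

lemma exp_log_mul_natCast (ha : 0 < a) (k : ℕ) : Real.exp (Real.log a * k) = a ^ k := by
  rw [← Real.rpow_def_of_pos ha, Real.rpow_natCast]

lemma measureReal_mul_log_le_natCast_le [IsFiniteMeasure μ] (ha : 1 ≤ a)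
    (hint : Integrable (fun ω ↦ a ^ N ω) μ) (c : ℝ) {x : ℝ} (hx : 0 < x) :
    μ.real {ω | c * Real.log x ≤ N ω} ≤ x ^ (-(c * Real.log a)) * ∫ ω, a ^ N ω ∂μ := by
  have chernoff := measure_ge_le_exp_mul_mgf (μ := μ) (X := fun ω ↦ (N ω : ℝ)) (c * Real.log x)
    (Real.log_nonneg ha)
  simp only [mgf, exp_log_mul_natCast (zero_lt_one.trans_le ha)] at chernoff
  rw [Real.rpow_def_of_pos hx]
  convert chernoff hint using 3
  ring

lemma measureReal_natCast_le_mul_log_le [IsFiniteMeasure μ] (ha₀ : 0 < a) (ha₁ : a ≤ 1)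
    (hint : Integrable (fun ω ↦ a ^ N ω) μ) (c : ℝ) {x : ℝ} (hx : 0 < x) :
    μ.real {ω | N ω ≤ c * Real.log x} ≤ x ^ (-(c * Real.log a)) * ∫ ω, a ^ N ω ∂μ := by
  have chernoff := measure_le_le_exp_mul_mgf (μ := μ) (X := fun ω ↦ (N ω : ℝ)) (c * Real.log x)
    (Real.log_nonpos ha₀.le ha₁)
  simp only [mgf, exp_log_mul_natCast ha₀] at chernoff
  rw [Real.rpow_def_of_pos hx]
  convert chernoff hint using 3
  ring

end Chernoff

lemma prod_Ico_one_add_one_div_add_one {v m : ℕ} (hvm : v ≤ m) :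
    ∏ j ∈ Finset.Ico v m, (1 + 1 / ((j : ℝ) + 1)) = ((m : ℝ) + 1) / (v + 1) := by
  induction m, hvm using Nat.le_induction with
  | base => rw [Finset.Ico_self, Finset.prod_empty, div_self (by positivity)]
  | succ m hvm ih =>
    rw [Finset.prod_Ico_succ_top hvm, ih]
    push_cast
    field_simp

lemma prod_range_one_add_div_add_one_le_exp {b : ℝ} (hb : -1 ≤ b) (m : ℕ) :
    ∏ j ∈ Finset.range m, (1 + b / ((j : ℝ) + 1)) ≤ Real.exp (b * harmonic m) := by
  have exponent_eq : b * harmonic m = ∑ j ∈ Finset.range m, b / ((j : ℝ) + 1) := by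
    simp [harmonic, Finset.mul_sum, div_eq_mul_inv]
  rw [exponent_eq, Real.exp_sum]
  refine Finset.prod_le_prod (fun j _ ↦ ?_) fun j _ ↦ ?_
  · have : (0 : ℝ) < j + 1 := by positivity
    rw [one_add_div this.ne']
    exact div_nonneg (by linarith [j.cast_nonneg (α := ℝ)]) this.le
  · rw [add_comm]
    exact Real.add_one_le_exp _

lemma tendsto_rpow_mul_one_add_log {r : ℝ} (hr : r < 0) :
    Tendsto (fun x : ℝ ↦ x ^ r * (1 + Real.log x)) atTop (nhds 0) := by
  have rpow_tendsto : Tendsto (fun x : ℝ ↦ x ^ r) atTop (nhds 0) := by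
    simpa using tendsto_rpow_neg_atTop (neg_pos.mpr hr)
  have log_tendsto : Tendsto (fun x : ℝ ↦ x ^ r * Real.log x) atTop (nhds 0) := by
    refine ((isLittleO_log_rpow_atTop (neg_pos.mpr hr)).tendsto_div_nhds_zero).congr' ?_
    filter_upwards [eventually_ge_atTop 0] with x hx
    rw [Real.rpow_neg hx, div_inv_eq_mul, mul_comm]
  simpa [mul_add] using rpow_tendsto.add log_tendsto

instance (n : ℕ) : IsProbabilityMeasure (urtMeasure n) := by
  unfold urtMeasure
  infer_instance

/-- The number of children of the vertex `v` in the recursive tree with parent map `p`. The label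
`v` ranges over all of `ℕ`; labels that do not occur in the tree have no children. -/
def urtChildCount (n : ℕ) (p : URTSpace n) (v : ℕ) : ℕ :=
  (Finset.univ.filter fun j : Fin (n - 1) ↦ (p j : ℕ) = v).card

lemma urtDegree_le_urtChildCount_add_one (n : ℕ) (p : URTSpace n) (v : Fin n) :
    urtDegree n p v ≤ urtChildCount n p v + 1 := by
  unfold urtDegree urtChildCount
  split_ifs <;> omega

lemma urtChildCount_zero_le_urtMaxDegree {n : ℕ} (hn : 0 < n) (p : URTSpace n) :
    urtChildCount n p 0 ≤ urtMaxDegree n p :=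
  calc urtChildCount n p 0 ≤ urtDegree n p ⟨0, hn⟩ := Nat.le_add_right _ _
    _ ≤ urtMaxDegree n p := Finset.le_sup (Finset.mem_univ _)

lemma pow_urtMaxDegree_le_mul_sum_pow_urtChildCount {n : ℕ} (hn : 0 < n) (p : URTSpace n)
    {a : ℝ} (ha : 1 ≤ a) :
    a ^ urtMaxDegree n p ≤ a * ∑ v : Fin n, a ^ urtChildCount n p v := by
  obtain ⟨v, -, hv⟩ : ∃ v ∈ Finset.univ, urtMaxDegree n p = urtDegree n p v :=
    Finset.exists_mem_eq_sup _ ⟨⟨0, hn⟩, Finset.mem_univ _⟩ _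
  calc a ^ urtMaxDegree n p
      ≤ a ^ (urtChildCount n p v + 1) :=
        pow_le_pow_right₀ ha (hv.trans_le (urtDegree_le_urtChildCount_add_one n p v))
    _ = a * a ^ urtChildCount n p v := pow_succ' _ _
    _ ≤ a * ∑ v : Fin n, a ^ urtChildCount n p v := by
        gcongr
        exact Finset.single_le_sum (f := fun v : Fin n ↦ a ^ urtChildCount n p v)
          (fun _ _ ↦ by positivity) (Finset.mem_univ v)

lemma integral_pow_urtChildCount (n v : ℕ) (a : ℝ) :
    ∫ p, a ^ urtChildCount n p v ∂(urtMeasure n) =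
      ∏ j ∈ Finset.Ico v (n - 1), (1 + (a - 1) / ((j : ℝ) + 1)) := by
  calc ∫ p, a ^ urtChildCount n p v ∂(urtMeasure n)
      = ∏ j : Fin (n - 1), (1 + (a - 1) * if v ≤ j then ((j : ℝ) + 1)⁻¹ else 0) := by
        simp_rw [← real_uniformOfFintype_fin_val_eq]
        exact integral_pow_card_filter_mem_pi
          (s := fun j : Fin (n - 1) ↦ {x : Fin (j + 1) | (x : ℕ) = v})
          _ (fun _ ↦ (Set.toFinite _).measurableSet) a
    _ = ∏ j ∈ Finset.range (n - 1), if v ≤ j then 1 + (a - 1) / ((j : ℝ) + 1) else 1 := by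
        rw [← Fin.prod_univ_eq_prod_range
          (fun j ↦ if v ≤ j then 1 + (a - 1) / ((j : ℝ) + 1) else 1)]
        refine Finset.prod_congr rfl fun j _ ↦ ?_
        split_ifs <;> simp [div_eq_mul_inv]
    _ = ∏ j ∈ Finset.Ico v (n - 1), (1 + (a - 1) / ((j : ℝ) + 1)) := by
        rw [← Finset.prod_filter]
        congr 1
        ext j
        simp [and_comm]

lemma integral_two_pow_urtChildCount {n v : ℕ} (hv : v < n) :
    ∫ p, (2 : ℝ) ^ urtChildCount n p v ∂(urtMeasure n) = n * ((v : ℝ) + 1)⁻¹ := by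
  have two_sub_one : (2 : ℝ) - 1 = 1 := by norm_num
  rw [integral_pow_urtChildCount, two_sub_one, prod_Ico_one_add_one_div_add_one (by omega),
    Nat.cast_pred (by omega), sub_add_cancel, div_eq_mul_inv]

lemma integral_two_pow_urtMaxDegree_le {n : ℕ} (hn : 0 < n) :
    ∫ p, (2 : ℝ) ^ urtMaxDegree n p ∂(urtMeasure n) ≤ 2 * (n * harmonic n) := by
  calc ∫ p, (2 : ℝ) ^ urtMaxDegree n p ∂(urtMeasure n)
      ≤ ∫ p, 2 * ∑ v : Fin n, (2 : ℝ) ^ urtChildCount n p v ∂(urtMeasure n) :=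
        integral_mono .of_finite .of_finite fun p ↦
          pow_urtMaxDegree_le_mul_sum_pow_urtChildCount hn p one_le_two
    _ = 2 * ∑ v : Fin n, n * (((v : ℕ) : ℝ) + 1)⁻¹ := by
        rw [integral_const_mul, integral_finsetSum _ fun _ _ ↦ .of_finite]
        simp_rw [integral_two_pow_urtChildCount (Fin.is_lt _)]
    _ = 2 * (n * harmonic n) := by
        rw [← Finset.mul_sum, Fin.sum_univ_eq_sum_range (fun v : ℕ ↦ ((v : ℝ) + 1)⁻¹)]
        simp [harmonic]

lemma integral_pow_urtMaxDegree_le {n : ℕ} (hn : 0 < n) {a : ℝ} (ha₀ : 0 ≤ a) (ha₁ : a ≤ 1) :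
    ∫ p, a ^ urtMaxDegree n p ∂(urtMeasure n) ≤ (n : ℝ) ^ (a - 1) := by
  have log_le_harmonic : Real.log n ≤ harmonic (n - 1) := by
    simpa only [Nat.sub_add_cancel hn] using log_add_one_le_harmonic (n - 1)
  calc ∫ p, a ^ urtMaxDegree n p ∂(urtMeasure n)
      ≤ ∫ p, a ^ urtChildCount n p 0 ∂(urtMeasure n) :=
        integral_mono .of_finite .of_finite fun p ↦
          pow_le_pow_of_le_one ha₀ ha₁ (urtChildCount_zero_le_urtMaxDegree hn p)
    _ = ∏ j ∈ Finset.range (n - 1), (1 + (a - 1) / ((j : ℝ) + 1)) := by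
        rw [integral_pow_urtChildCount, Finset.range_eq_Ico]
    _ ≤ Real.exp ((a - 1) * harmonic (n - 1)) :=
        prod_range_one_add_div_add_one_le_exp (by linarith) _
    _ ≤ Real.exp (Real.log n * (a - 1)) := by
        rw [mul_comm (Real.log n)]
        exact Real.exp_le_exp.mpr (mul_le_mul_of_nonpos_left log_le_harmonic (by linarith))
    _ = (n : ℝ) ^ (a - 1) := (Real.rpow_def_of_pos (Nat.cast_pos.mpr hn) _).symm

lemma tendsto_measureReal_mul_log_le_urtMaxDegree {C : ℝ} (hC : (Real.log 2)⁻¹ < C) :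
    Tendsto (fun n : ℕ ↦ (urtMeasure n).real {p | C * Real.log n ≤ urtMaxDegree n p})
      atTop (nhds 0) := by
  have exponent_neg : 1 - C * Real.log 2 < 0 :=
    sub_neg.mpr ((inv_lt_iff_one_lt_mul₀ (Real.log_pos one_lt_two)).mp hC)
  have bound_tendsto : Tendsto (fun n : ℕ ↦
      2 * ((n : ℝ) ^ (1 - C * Real.log 2) * (1 + Real.log n))) atTop (nhds 0) := by
    simpa using ((tendsto_rpow_mul_one_add_log exponent_neg).comp
      tendsto_natCast_atTop_atTop).const_mul 2
  refine squeeze_zero' (.of_forall fun _ ↦ measureReal_nonneg) ?_ bound_tendsto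
  filter_upwards [eventually_gt_atTop 0] with n hn
  have hn' : (0 : ℝ) < n := Nat.cast_pos.mpr hn
  calc (urtMeasure n).real {p | C * Real.log n ≤ urtMaxDegree n p}
      ≤ (n : ℝ) ^ (-(C * Real.log 2)) * ∫ p, (2 : ℝ) ^ urtMaxDegree n p ∂(urtMeasure n) :=
        measureReal_mul_log_le_natCast_le one_le_two .of_finite C hn'
    _ ≤ (n : ℝ) ^ (-(C * Real.log 2)) * (2 * (n * (1 + Real.log n))) := by
        gcongr
        exact (integral_two_pow_urtMaxDegree_le hn).trans
          (by gcongr; exact harmonic_le_one_add_log n)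
    _ = 2 * ((n : ℝ) ^ (1 - C * Real.log 2) * (1 + Real.log n)) := by
        rw [sub_eq_add_neg, Real.rpow_add hn', Real.rpow_one]
        ring

lemma tendsto_measureReal_urtMaxDegree_le_mul_log {c : ℝ} (hc₀ : 0 < c) (hc₁ : c < 1) :
    Tendsto (fun n : ℕ ↦ (urtMeasure n).real {p | urtMaxDegree n p ≤ c * Real.log n})
      atTop (nhds 0) := by
  have exponent_neg : -(c * Real.log c) + (c - 1) < 0 := by
    have log_inv_lt := Real.log_lt_sub_one_of_pos (inv_pos.mpr hc₀) (inv_ne_one.mpr hc₁.ne)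
    have := mul_lt_mul_of_pos_left log_inv_lt hc₀
    rw [Real.log_inv, mul_sub, mul_inv_cancel₀ hc₀.ne'] at this
    linarith
  have bound_tendsto : Tendsto (fun n : ℕ ↦ (n : ℝ) ^ (-(c * Real.log c) + (c - 1)))
      atTop (nhds 0) := by
    simpa using! (tendsto_rpow_neg_atTop (neg_pos.mpr exponent_neg)).comp
      tendsto_natCast_atTop_atTop
  refine squeeze_zero' (.of_forall fun _ ↦ measureReal_nonneg) ?_ bound_tendsto
  filter_upwards [eventually_gt_atTop 0] with n hn
  have hn' : (0 : ℝ) < n := Nat.cast_pos.mpr hn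
  calc (urtMeasure n).real {p | urtMaxDegree n p ≤ c * Real.log n}
      ≤ (n : ℝ) ^ (-(c * Real.log c)) * ∫ p, c ^ urtMaxDegree n p ∂(urtMeasure n) :=
        measureReal_natCast_le_mul_log_le hc₀ hc₁.le .of_finite c hn'
    _ ≤ (n : ℝ) ^ (-(c * Real.log c)) * (n : ℝ) ^ (c - 1) := by
        gcongr
        exact integral_pow_urtMaxDegree_le hn hc₀.le hc₁.le
    _ = (n : ℝ) ^ (-(c * Real.log c) + (c - 1)) := (Real.rpow_add hn' _ _).symm

theorem urt_maxDegree_general {c C : ℝ} (hc₀ : 0 < c) (hc₁ : c < 1) (hC : (Real.log 2)⁻¹ < C) :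
    Tendsto (fun n : ℕ ↦
        (urtMeasure n).real {p | c * Real.log n ≤ (urtMaxDegree n p : ℝ) ∧
          (urtMaxDegree n p : ℝ) ≤ C * Real.log n})
      atTop (nhds 1) := by
  have tails_tendsto := (tendsto_measureReal_urtMaxDegree_le_mul_log hc₀ hc₁).add
    (tendsto_measureReal_mul_log_le_urtMaxDegree hC)
  have lower_tendsto := tails_tendsto.const_sub 1
  rw [add_zero, sub_zero] at lower_tendsto
  refine tendsto_of_tendsto_of_tendsto_of_le_of_le lower_tendsto tendsto_const_nhds
    (fun n ↦ ?_) fun n ↦ measureReal_le_one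
  set good := {p : URTSpace n | c * Real.log n ≤ (urtMaxDegree n p : ℝ) ∧
    (urtMaxDegree n p : ℝ) ≤ C * Real.log n}
  have compl_subset : goodᶜ ⊆ {p | (urtMaxDegree n p : ℝ) ≤ c * Real.log n} ∪
      {p | C * Real.log n ≤ urtMaxDegree n p} := by
    intro p hp
    rcases not_and_or.mp hp with h | h
    · exact .inl (not_le.mp h).le
    · exact .inr (not_le.mp h).le
  have compl_le := (measureReal_mono (μ := urtMeasure n) compl_subset).trans
    (measureReal_union_le _ _)
  rw [probReal_compl_eq_one_sub (Set.toFinite good).measurableSet] at compl_le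
  exact sub_le_comm.mp compl_le

/-- With high probability the maximum degree of the uniform random recursive tree is of order
`Θ(ln n)`: there are constants `0 < c < C` such that the probability that the maximum degree
lies in `[c·ln n, C·ln n]` tends to `1` as `n → ∞`. -/
theorem urt_maxDegree :
    ∃ c C : ℝ, 0 < c ∧ c < C ∧
      Tendsto (fun n : ℕ =>
          (urtMeasure n {p | c * Real.log n ≤ (urtMaxDegree n p : ℝ) ∧
            (urtMaxDegree n p : ℝ) ≤ C * Real.log n}).toReal)
        atTop (nhds 1) := by
  have inv_log_two_lt : (Real.log 2)⁻¹ < 2 := by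
    rw [inv_lt_comm₀ (Real.log_pos one_lt_two) two_pos]
    linarith [Real.log_two_gt_d9]
  exact ⟨1 / 2, 2, by norm_num, by norm_num,
    urt_maxDegree_general (by norm_num) (by norm_num) inv_log_two_lt⟩
end

section
/- For every real b with 1/2 ≤ b < 1: the denominators 2+ξ−1/b and 2+ξ−1/F(b) are positive, F(b) > 1, 1/2 < F(F(b)) < 1, and the exact identity 1 − F(F(b)) = (1 − b) / (ξ·(2+ξ)·b + 1) holds; consequently 1 − F(F(b)) ≤ (1 − b) / (ξ·(1+ξ/2) + 1). -/
/-- The map `F(b) = (1+ξ)/(2+ξ−1/b)`. -/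
noncomputable def F (ξ b : ℝ) : ℝ := (1 + ξ) / (2 + ξ - 1 / b)

/-! In the coordinate `1 / b - 1` the map `F ξ` is multiplication by `-1 / (1 + ξ)`. One step
therefore crosses the fixed point `1`, and two steps divide the coordinate by `(1 + ξ) ^ 2`, which
moves `b` strictly closer to `1`. Solving for `F ξ (F ξ b)` gives the exact contraction factor
`1 / (ξ * (2 + ξ) * b + 1)`, which decreases in `b` and so is largest at `b = 1 / 2`. -/

section

variable {ξ a b : ℝ}

-- Also true when `b = 0` or `2 + ξ - 1 / b = 0`, by the convention `x / 0 = 0`.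
theorem one_div_F_sub_one (hξ : 1 + ξ ≠ 0) (b : ℝ) :
    1 / F ξ b - 1 = -(1 / b - 1) / (1 + ξ) := by
  rw [F, one_div_div, div_sub_one hξ]
  ring

theorem one_div_F_F_sub_one (hξ : 1 + ξ ≠ 0) (b : ℝ) :
    1 / F ξ (F ξ b) - 1 = (1 / b - 1) / (1 + ξ) ^ 2 := by
  rw [one_div_F_sub_one hξ, one_div_F_sub_one hξ, ← neg_div, neg_neg, div_div, ← sq]

theorem F_F_eq_div (hξ : 1 + ξ ≠ 0) (hb : b ≠ 0) :
    F ξ (F ξ b) = (1 + ξ) ^ 2 * b / (ξ * (2 + ξ) * b + 1) := by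
  have inv_eq : 1 / F ξ (F ξ b) = (ξ * (2 + ξ) * b + 1) / ((1 + ξ) ^ 2 * b) := by
    rw [sub_eq_iff_eq_add.mp (one_div_F_F_sub_one hξ b)]
    field_simp
    ring
  rw [← one_div_one_div (F ξ (F ξ b)), inv_eq, one_div_div]

theorem one_sub_F_F (hξ : 1 + ξ ≠ 0) (hb : b ≠ 0) (hden : ξ * (2 + ξ) * b + 1 ≠ 0) :
    1 - F ξ (F ξ b) = (1 - b) / (ξ * (2 + ξ) * b + 1) := by
  rw [F_F_eq_div hξ hb, one_sub_div hden]
  ring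

theorem one_lt_F (hb₀ : 0 < b) (hb₁ : b < 1) (hden : 0 < 2 + ξ - 1 / b) : 1 < F ξ b := by
  have one_lt_one_div_b : 1 < 1 / b := one_lt_one_div hb₀ hb₁
  rw [F, one_lt_div hden]
  linarith

theorem F_F_mem_Ioo (hξ : 0 < ξ) (hb₀ : 0 < b) (hb₁ : b < 1) :
    F ξ (F ξ b) ∈ Set.Ioo b 1 := by
  have one_lt_den : 1 < ξ * (2 + ξ) * b + 1 := lt_add_of_pos_left 1 (by positivity)
  have gap_eq : 1 - F ξ (F ξ b) = (1 - b) / (ξ * (2 + ξ) * b + 1) :=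
    one_sub_F_F (by positivity) hb₀.ne' (by positivity)
  have gap_pos : 0 < 1 - F ξ (F ξ b) := gap_eq ▸ div_pos (sub_pos.mpr hb₁) (by positivity)
  have gap_lt : 1 - F ξ (F ξ b) < 1 - b := gap_eq ▸ div_lt_self (sub_pos.mpr hb₁) one_lt_den
  exact ⟨sub_lt_sub_iff_left 1 |>.mp gap_lt, sub_pos.mp gap_pos⟩

theorem one_sub_F_F_le (hξ : 0 ≤ ξ) (ha : 0 < a) (hab : a ≤ b) (hb : b ≤ 1) :
    1 - F ξ (F ξ b) ≤ (1 - b) / (ξ * (2 + ξ) * a + 1) := by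
  have hb₀ : 0 < b := ha.trans_le hab
  rw [one_sub_F_F (by positivity) hb₀.ne' (by positivity)]
  have : 0 ≤ 1 - b := sub_nonneg.mpr hb
  gcongr

end

/-- For `1/2 ≤ b < 1`: the denominators occurring in `F b` and `F (F b)` are positive,
`F b > 1`, `1/2 < F (F b) < 1`, the exact identity
`1 − F(F(b)) = (1 − b)/(ξ·(2+ξ)·b + 1)` holds, and consequently
`1 − F(F(b)) ≤ (1 − b)/(ξ·(1+ξ/2) + 1)`. -/
theorem F_iterate_lower (ξ : ℝ) (hξ : 0 < ξ) (b : ℝ) (hb1 : 1 / 2 ≤ b) (hb2 : b < 1) :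
    0 < 2 + ξ - 1 / b ∧
    0 < 2 + ξ - 1 / F ξ b ∧
    1 < F ξ b ∧
    1 / 2 < F ξ (F ξ b) ∧
    F ξ (F ξ b) < 1 ∧
    1 - F ξ (F ξ b) = (1 - b) / (ξ * (2 + ξ) * b + 1) ∧
    1 - F ξ (F ξ b) ≤ (1 - b) / (ξ * (1 + ξ / 2) + 1) := by
  have hb₀ : 0 < b := one_half_pos.trans_le hb1
  have one_div_b_le : 1 / b ≤ 2 := (one_div_le hb₀ two_pos).mpr hb1
  have den_pos : 0 < 2 + ξ - 1 / b := by linarith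
  have F_gt : 1 < F ξ b := one_lt_F hb₀ hb2 den_pos
  have one_div_F_lt : 1 / F ξ b < 1 := (div_lt_one (one_pos.trans F_gt)).mpr F_gt
  obtain ⟨lt_F_F, F_F_lt⟩ := F_F_mem_Ioo hξ hb₀ hb2
  have half_rate : ξ * (1 + ξ / 2) = ξ * (2 + ξ) * (1 / 2) := by ring
  exact ⟨den_pos, by linarith, F_gt, hb1.trans_lt lt_F_F, F_F_lt,
    one_sub_F_F (by positivity) hb₀.ne' (by positivity),
    half_rate ▸ one_sub_F_F_le hξ.le one_half_pos hb1 hb2.le⟩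
end
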